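/- The strict inequality ((ρ+λ0+λ1−μ2)/(ρ−μ2)) · ((1−δ1)/(−δ1)) > ((ρ+λ0+λ1−μ1)/(ρ−μ1)) · ((1−δ3)/(−δ3)) holds. -/

import Mathlib

/-!
Let `d ≤ r` be the roots of `X ^ 2 - m * X - c`. Vieta's formulas give `c = -d * r` and, evaluating
the quadratic at `1`, `c + m - 1 = (1 - d) * (r - 1)`, so
`c / (c + m - 1) * ((1 - d) / -d) = r / (r - 1)`. The right-hand side decreases in `r > 1` and `r`
increases with `c`. With `c = (ρ - μ1) / σ` one has `c + m - 1 = (ρ - μ2) / σ`, and `λ0 + λ1 > 0`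
only increases `c`.
-/

/-- The smaller root of `X ^ 2 - m * X - c`, meaningful when `0 ≤ m ^ 2 + 4 * c`. The parameters
`δ1` and `δ3` are its values at `c = (ρ - μ1) / σ` and `c = (ρ + λ0 + λ1 - μ1) / σ`. -/
noncomputable def lowerRoot (m c : ℝ) : ℝ := (m - √(m ^ 2 + 4 * c)) / 2

/-- The larger root of `X ^ 2 - m * X - c`, meaningful when `0 ≤ m ^ 2 + 4 * c`. Both sides of the
inequality are compared through it. -/
noncomputable def upperRoot (m c : ℝ) : ℝ := (m + √(m ^ 2 + 4 * c)) / 2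

section Roots

variable {m c : ℝ}

theorem lowerRoot_add_upperRoot (m c : ℝ) : lowerRoot m c + upperRoot m c = m := by
  unfold lowerRoot upperRoot
  ring

theorem lowerRoot_mul_upperRoot (h : 0 ≤ m ^ 2 + 4 * c) : lowerRoot m c * upperRoot m c = -c := by
  unfold lowerRoot upperRoot
  linear_combination -(Real.sq_sqrt h) / 4

theorem one_sub_lowerRoot_mul_upperRoot_sub_one (h : 0 ≤ m ^ 2 + 4 * c) :
    (1 - lowerRoot m c) * (upperRoot m c - 1) = c + m - 1 := by
  linear_combination lowerRoot_add_upperRoot m c - lowerRoot_mul_upperRoot h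

theorem lowerRoot_neg (hc : 0 < c) : lowerRoot m c < 0 := by
  have hm : m < √(m ^ 2 + 4 * c) := Real.lt_sqrt_of_sq_lt (by linarith)
  unfold lowerRoot
  linarith

theorem one_lt_upperRoot (hc : 0 < c) (hcm : 0 < c + m - 1) : 1 < upperRoot m c := by
  rw [← one_sub_lowerRoot_mul_upperRoot_sub_one (by positivity)] at hcm
  have hd : 0 < 1 - lowerRoot m c := by linarith [lowerRoot_neg (m := m) hc]
  exact sub_pos.mp (pos_of_mul_pos_right hcm hd.le)

theorem strictMonoOn_upperRoot (m : ℝ) : StrictMonoOn (upperRoot m) {c | 0 ≤ m ^ 2 + 4 * c} := by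
  intro c hc C _ hcC
  have hsqrt : √(m ^ 2 + 4 * c) < √(m ^ 2 + 4 * C) := Real.sqrt_lt_sqrt hc (by linarith)
  unfold upperRoot
  linarith

theorem div_mul_one_sub_lowerRoot_div_neg (hc : 0 < c) :
    c / (c + m - 1) * ((1 - lowerRoot m c) / -lowerRoot m c) =
      upperRoot m c / (upperRoot m c - 1) := by
  have hdisc : 0 ≤ m ^ 2 + 4 * c := by positivity
  have hd : lowerRoot m c ≠ 0 := (lowerRoot_neg hc).ne
  have hd' : 1 - lowerRoot m c ≠ 0 := by linarith [lowerRoot_neg (m := m) hc]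
  have hprod : -lowerRoot m c * upperRoot m c = c := by
    rw [neg_mul, lowerRoot_mul_upperRoot hdisc, neg_neg]
  calc c / (c + m - 1) * ((1 - lowerRoot m c) / -lowerRoot m c)
      = (-lowerRoot m c * upperRoot m c) / ((1 - lowerRoot m c) * (upperRoot m c - 1)) *
          ((1 - lowerRoot m c) / -lowerRoot m c) := by
        rw [one_sub_lowerRoot_mul_upperRoot_sub_one hdisc, hprod]
    _ = upperRoot m c / (upperRoot m c - 1) := by field_simp

end Roots

theorem strictAntiOn_div_sub_one {K : Type*} [Field K] [LinearOrder K] [IsStrictOrderedRing K] :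
    StrictAntiOn (fun x : K => x / (x - 1)) (Set.Ioi 1) := by
  intro x hx y hy hxy
  rw [Set.mem_Ioi, ← sub_pos] at hx hy
  rw [div_lt_div_iff₀ hy hx]
  linarith

theorem strictAntiOn_div_mul_one_sub_lowerRoot_div_neg (m : ℝ) :
    StrictAntiOn (fun c => c / (c + m - 1) * ((1 - lowerRoot m c) / -lowerRoot m c))
      {c | 0 < c ∧ 0 < c + m - 1} := by
  have hmono : StrictMonoOn (upperRoot m) {c | 0 < c ∧ 0 < c + m - 1} :=
    (strictMonoOn_upperRoot m).mono fun c ⟨hc, _⟩ => by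
      change 0 ≤ m ^ 2 + 4 * c
      positivity
  have hanti := strictAntiOn_div_sub_one.comp_strictMonoOn hmono
    fun c ⟨hc, hcm⟩ => one_lt_upperRoot hc hcm
  exact hanti.congr fun c ⟨hc, _⟩ => (div_mul_one_sub_lowerRoot_div_neg hc).symm

theorem stmt_9 (μ1 μ2 ρ σ lam0 lam1 m δ1 δ3 : ℝ)
    (hσ : 0 < σ) (hlam0 : 0 < lam0) (hlam1 : 0 < lam1)
    (hμ1 : μ1 < ρ) (hμ2 : μ2 < ρ)
    (hm : m = 1 + (μ1 - μ2) / σ)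
    (hδ1 : δ1 = (m - Real.sqrt (m ^ 2 + 4 * (ρ - μ1) / σ)) / 2)
    (hδ3 : δ3 = (m - Real.sqrt (m ^ 2 + 4 * (ρ + lam0 + lam1 - μ1) / σ)) / 2) :
    (ρ + lam0 + lam1 - μ2) / (ρ - μ2) * ((1 - δ1) / (-δ1)) >
      (ρ + lam0 + lam1 - μ1) / (ρ - μ1) * ((1 - δ3) / (-δ3)) := by
  have hroot1 : lowerRoot m ((ρ - μ1) / σ) = δ1 := by rw [hδ1, mul_div_assoc, lowerRoot]
  have hroot3 : lowerRoot m ((ρ + lam0 + lam1 - μ1) / σ) = δ3 := by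
    rw [hδ3, mul_div_assoc, lowerRoot]
  have hshift (r : ℝ) : (r - μ1) / σ + m - 1 = (r - μ2) / σ := by rw [hm]; ring
  have hmem {r : ℝ} (h1 : μ1 < r) (h2 : μ2 < r) :
      (r - μ1) / σ ∈ {c | 0 < c ∧ 0 < c + m - 1} :=
    ⟨div_pos (sub_pos.mpr h1) hσ, hshift r ▸ div_pos (sub_pos.mpr h2) hσ⟩
  have hlt : (ρ - μ1) / σ < (ρ + lam0 + lam1 - μ1) / σ := by gcongr; linarith
  have hweight := strictAntiOn_div_mul_one_sub_lowerRoot_div_neg m (hmem hμ1 hμ2)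
    (hmem (r := ρ + lam0 + lam1) (by linarith) (by linarith)) hlt
  simp only [hshift, hroot1, hroot3, div_div_div_cancel_right₀ hσ.ne'] at hweight
  have ha : 0 < ρ - μ1 := sub_pos.mpr hμ1
  have hB : 0 < ρ + lam0 + lam1 - μ2 := by linarith
  calc (ρ + lam0 + lam1 - μ1) / (ρ - μ1) * ((1 - δ3) / (-δ3))
      = (ρ + lam0 + lam1 - μ2) / (ρ - μ1) *
          ((ρ + lam0 + lam1 - μ1) / (ρ + lam0 + lam1 - μ2) * ((1 - δ3) / (-δ3))) := by field_simp
    _ < (ρ + lam0 + lam1 - μ2) / (ρ - μ1) * ((ρ - μ1) / (ρ - μ2) * ((1 - δ1) / (-δ1))) := by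
      gcongr
    _ = (ρ + lam0 + lam1 - μ2) / (ρ - μ2) * ((1 - δ1) / (-δ1)) := by field_simp
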